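/- arXiv:2106.11122 — 10 statements merged into one kernel-verified Lean document; each statement's English description precedes it below -/
import Mathlib

section
/- The map ι̃ is an isometric immersion of the half-space metric into the bilinear form of signature (p, q+1): for every (x, y, z) ∈ ℋ^{p,q} and every vector (u, v, w) ∈ ℝ^{p−1} × ℝ^q × ℝ, the Fréchet derivative D of ι̃ at (x, y, z) satisfies ⟨Dι̃_{(x,y,z)}(u, v, w), Dι̃_{(x,y,z)}(u, v, w)⟩ = (‖u‖² − ‖v‖² + w²)/z². -/
/-!
The derivative in the direction `(u, v, w)` is the velocity at `t = 0` of the curve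
`t ↦ ι̃ (x + t u, y + t v, z + t w)`. With `h = ‖x‖² - ‖y‖²`, the components `X_p` and `X_{p+q+1}`
of this velocity are `(∓ (h' + 2 z w) z - (1 ∓ (h + z²)) w) / (2 z²)`, where
`h' = 2 (⟪x, u⟫ - ⟪y, v⟫)`. Expanding the bilinear form then leaves an identity of rational
functions in `z`, `w` and the inner products of `x, u` and of `y, v`.
-/

open scoped RealInnerProductSpace

noncomputable section

/-- Euclidean space `ℝ^n`. -/
abbrev E (n : ℕ) : Type := EuclideanSpace ℝ (Fin n)

/-- The bilinear form of signature `(p, q+1)` on `ℝ^{p+q+1}`, with coordinates grouped as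
`(X_1,…,X_{p-1}) × X_p × (X_{p+1},…,X_{p+q}) × X_{p+q+1}`. -/
def Mink (p q : ℕ) (X Y : E (p - 1) × ℝ × E q × ℝ) : ℝ :=
  ⟪X.1, Y.1⟫ + X.2.1 * Y.2.1 - ⟪X.2.2.1, Y.2.2.1⟫ - X.2.2.2 * Y.2.2.2

/-- The embedding `ι̃` of the half-space model into `ℝ^{p+q+1}`. -/
def iotaT (p q : ℕ) (P : E (p - 1) × E q × ℝ) : E (p - 1) × ℝ × E q × ℝ :=
  (P.2.2⁻¹ • P.1,
   (1 - (‖P.1‖ ^ 2 - ‖P.2.1‖ ^ 2) - P.2.2 ^ 2) / (2 * P.2.2),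
   P.2.2⁻¹ • P.2.1,
   (1 + (‖P.1‖ ^ 2 - ‖P.2.1‖ ^ 2) + P.2.2 ^ 2) / (2 * P.2.2))

/-- The directional derivative of `ι̃`, obtained by differentiating along a straight line. -/
lemma fderiv_iotaT_apply (p q : ℕ) (x : E (p - 1)) (y : E q) (z : ℝ) (hz : z ≠ 0)
    (u : E (p - 1)) (v : E q) (w : ℝ) :
    fderiv ℝ (iotaT p q) (x, y, z) (u, v, w) =
      (z⁻¹ • u + (-w / z ^ 2) • x,
       (-(2 * ⟪x, u⟫ - 2 * ⟪y, v⟫ + 2 * z * w) * (2 * z)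
          - (1 - (‖x‖ ^ 2 - ‖y‖ ^ 2) - z ^ 2) * (2 * w)) / (2 * z) ^ 2,
       z⁻¹ • v + (-w / z ^ 2) • y,
       ((2 * ⟪x, u⟫ - 2 * ⟪y, v⟫ + 2 * z * w) * (2 * z)
          - (1 + (‖x‖ ^ 2 - ‖y‖ ^ 2) + z ^ 2) * (2 * w)) / (2 * z) ^ 2) := by
  have hdiff : DifferentiableAt ℝ (iotaT p q) (x, y, z) := by
    have h2 : (2 * z) ≠ 0 := by positivity
    have hx : DifferentiableAt ℝ (fun P : E (p - 1) × E q × ℝ => ‖P.1‖ ^ 2) (x, y, z) :=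
      differentiableAt_fst.norm_sq ℝ
    have hy : DifferentiableAt ℝ (fun P : E (p - 1) × E q × ℝ => ‖P.2.1‖ ^ 2) (x, y, z) :=
      differentiableAt_snd.fst.norm_sq ℝ
    unfold iotaT
    fun_prop (disch := assumption)
  have hline {F : Type} [NormedAddCommGroup F] [NormedSpace ℝ F] (a b : F) :
      HasDerivAt (fun t : ℝ => a + t • b) b 0 := by
    simpa using ((hasDerivAt_id (0 : ℝ)).smul_const b).const_add a
  have hx := hline x u
  have hy := hline y v
  have hw : HasDerivAt (fun t : ℝ => z + t * w) w 0 := hline z w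
  have hcurve := hx.prodMk (hy.prodMk hw)
  have hz0 : z + 0 * w ≠ 0 := by simpa using hz
  have hinv := hw.inv hz0
  have hh := hx.norm_sq.sub hy.norm_sq
  have hsq := hw.pow 2
  have hden := hw.const_mul 2
  have hden0 : 2 * (z + 0 * w) ≠ 0 := mul_ne_zero two_ne_zero hz0
  have hexplicit := (hinv.smul hx).prodMk <|
    ((((hh.const_sub 1).sub hsq).div hden hden0)).prodMk <|
    (hinv.smul hy).prodMk <| ((hh.const_add 1).add hsq).div hden hden0
  have hcomp := HasFDerivAt.comp_hasDerivAt_of_eq (0 : ℝ) hdiff.hasFDerivAt hcurve (by simp)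
  refine (hcomp.unique hexplicit).trans ?_
  simp
  ring_nf

/-- `ι̃` is an isometric immersion: the pullback of the bilinear form of signature `(p, q+1)`
by the Fréchet derivative of `ι̃` is the half-space metric. -/
theorem stmt1 (p q : ℕ) (hp : 1 ≤ p) (x : E (p - 1)) (y : E q) (z : ℝ) (hz : 0 < z)
    (u : E (p - 1)) (v : E q) (w : ℝ) :
    Mink p q (fderiv ℝ (iotaT p q) (x, y, z) (u, v, w))
      (fderiv ℝ (iotaT p q) (x, y, z) (u, v, w))
      = (‖u‖ ^ 2 - ‖v‖ ^ 2 + w ^ 2) / z ^ 2 := by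
  have hz0 : z ≠ 0 := hz.ne'
  rw [fderiv_iotaT_apply p q x y z hz0]
  simp only [Mink, inner_add_left, inner_add_right, real_inner_smul_left, real_inner_smul_right,
    real_inner_self_eq_norm_sq, norm_smul, mul_pow, Real.norm_eq_abs, sq_abs,
    real_inner_comm x u, real_inner_comm y v]
  field_simp
  ring
end
end

section
/- Vertical affine conditions are preserved by geodesics: let (a, b) ∈ ℝ^{p−1} × ℝ^q, c ∈ ℝ, and let γ(t) = (x(t), y(t), z(t)) be a C² curve defined on an interval I containing 0, with values in ℋ^{p,q}, satisfying the geodesic equations of g. If a·x(0) + b·y(0) = c and a·x′(0) + b·y′(0) = 0, then a·x(t) + b·y(t) = c for all t ∈ I (here · denotes the Euclidean dot product). -/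
/-!
With `f = a·x + b·y`, the first two geodesic equations give the linear equation
`f″ = (2z′/z) f′`, so `f′ / z²` has zero derivative on `I`. It vanishes at `0`, hence `f′ = 0`
throughout `I`, and `f` is constant.
-/

open scoped RealInnerProductSpace

noncomputable section

theorem eq_zero_value_of_hasDerivAt_zero {I : Set ℝ} (hconv : Convex ℝ I) (h0 : (0 : ℝ) ∈ I)
    {f : ℝ → ℝ} (hf : ∀ t ∈ I, HasDerivAt f 0 t) : ∀ t ∈ I, f t = f 0 := by
  intro t ht
  have h := hconv.norm_image_sub_le_of_norm_hasDerivWithin_le (f := f) (f' := fun _ => 0) (C := 0)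
    (fun s hs => (hf s hs).hasDerivWithinAt) (by simp) h0 ht
  rw [zero_mul, norm_le_zero_iff, sub_eq_zero] at h
  exact h

/-- Vertical affine conditions are preserved by geodesics of the half-space metric:
if a C² curve `γ(t) = (x(t), y(t), z(t))` in the half-space satisfies the geodesic equations
and the initial conditions `a·x(0) + b·y(0) = c`, `a·x′(0) + b·y′(0) = 0`,
then `a·x(t) + b·y(t) = c` for all `t` in the interval. -/
theorem stmt5 (p q : ℕ) (hp : 1 ≤ p)
    (a : E (p - 1)) (b : E q) (c : ℝ)
    (I : Set ℝ) (hconv : Convex ℝ I) (h0 : (0 : ℝ) ∈ I)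
    (x x' x'' : ℝ → E (p - 1)) (y y' y'' : ℝ → E q) (z z' z'' : ℝ → ℝ)
    (hz : ∀ t ∈ I, 0 < z t)
    (hx : ∀ t ∈ I, HasDerivAt x (x' t) t) (hx' : ∀ t ∈ I, HasDerivAt x' (x'' t) t)
    (hy : ∀ t ∈ I, HasDerivAt y (y' t) t) (hy' : ∀ t ∈ I, HasDerivAt y' (y'' t) t)
    (hzd : ∀ t ∈ I, HasDerivAt z (z' t) t) (hzd' : ∀ t ∈ I, HasDerivAt z' (z'' t) t)
    (geox : ∀ t ∈ I, x'' t = (2 * z' t / z t) • x' t)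
    (geoy : ∀ t ∈ I, y'' t = (2 * z' t / z t) • y' t)
    (geoz : ∀ t ∈ I, z'' t + (‖x' t‖ ^ 2 - ‖y' t‖ ^ 2 - (z' t) ^ 2) / z t = 0)
    (hinit : ⟪a, x 0⟫ + ⟪b, y 0⟫ = c)
    (hinit' : ⟪a, x' 0⟫ + ⟪b, y' 0⟫ = 0) :
    ∀ t ∈ I, ⟪a, x t⟫ + ⟪b, y t⟫ = c := by
  have hf : ∀ t ∈ I, HasDerivAt (fun s => ⟪a, x s⟫ + ⟪b, y s⟫) (⟪a, x' t⟫ + ⟪b, y' t⟫) t := by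
    intro t ht
    have h := ((hasDerivAt_const t a).inner ℝ (hx t ht)).add
      ((hasDerivAt_const t b).inner ℝ (hy t ht))
    refine h.congr_deriv ?_
    simp only [inner_zero_left, add_zero]
  have hf' : ∀ t ∈ I, HasDerivAt (fun s => ⟪a, x' s⟫ + ⟪b, y' s⟫)
      (2 * z' t / z t * (⟪a, x' t⟫ + ⟪b, y' t⟫)) t := by
    intro t ht
    have h := ((hasDerivAt_const t a).inner ℝ (hx' t ht)).add
      ((hasDerivAt_const t b).inner ℝ (hy' t ht))
    rw [geox t ht, geoy t ht] at h
    refine h.congr_deriv ?_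
    simp only [inner_smul_right, inner_zero_left]
    ring
  have hquot : ∀ t ∈ I, HasDerivAt (fun s => (⟪a, x' s⟫ + ⟪b, y' s⟫) / z s ^ 2) 0 t := by
    intro t ht
    have hzt : z t ≠ 0 := (hz t ht).ne'
    refine ((hf' t ht).fun_div ((hzd t ht).fun_pow 2) (pow_ne_zero 2 hzt)).congr_deriv ?_
    field_simp
    ring
  have hzero : ∀ t ∈ I, ⟪a, x' t⟫ + ⟪b, y' t⟫ = 0 := by
    intro t ht
    have h := eq_zero_value_of_hasDerivAt_zero hconv h0 hquot t ht
    simp only [hinit', zero_div] at h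
    exact (div_eq_zero_iff.mp h).resolve_right (pow_ne_zero 2 (hz t ht).ne')
  intro t ht
  rw [← hinit]
  exact eq_zero_value_of_hasDerivAt_zero hconv h0 (fun s hs => hzero s hs ▸ hf s hs) t ht
end
end

section
/- Curves cut on the totally geodesic quadrics by vertical 2-planes are pregeodesics: fix (x₀, y₀) ∈ ℝ^{p−1} × ℝ^q, c ∈ ℝ, (u₀, v₀) ∈ ℝ^{p−1} × ℝ^q, (u, v) ∈ ℝ^{p−1} × ℝ^q, and let I be an open interval on which c − ‖u₀ + tu − x₀‖² + ‖v₀ + tv − y₀‖² > 0; define f(t) = √(c − ‖u₀ + tu − x₀‖² + ‖v₀ + tv − y₀‖²) on I. Then (i) f satisfies (f′)² + f″f = −‖u‖² + ‖v‖² on I, and (ii) the curve γ(t) = (u₀ + tu, v₀ + tv, f(t)) satisfies the pregeodesic equations of g with factor λ(t) = −2f′(t)/f(t). -/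
/-!
Along an affine line the radicand is a quadratic polynomial `h(t) = a + b t + k t²` with leading
coefficient `k = -‖u‖² + ‖v‖²`. Where `h > 0`, the function `f = √h` satisfies `f' = h' / (2 f)`,
that is `(f f)' = h'`; differentiating `f f' = h' / 2` once more gives
`(f')² + f'' f = h'' / 2 = k` (`sqrt_quadratic_deriv`). The equations for the affine components
hold because their second derivatives vanish, and the vertical equation, multiplied by `f`, is
exactly the identity for `f`.
-/


open scoped RealInnerProductSpace

noncomputable section

theorem norm_line_sq {n : ℕ} (w₀ w a : E n) (t : ℝ) :
    ‖w₀ + t • w - a‖ ^ 2 = ‖w₀ - a‖ ^ 2 + 2 * t * ⟪w₀ - a, w⟫ + t ^ 2 * ‖w‖ ^ 2 := by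
  have h : w₀ + t • w - a = (w₀ - a) + t • w := by abel
  rw [h, norm_add_sq_real, inner_smul_right, norm_smul, mul_pow, Real.norm_eq_abs, sq_abs]
  ring

theorem deriv_line {n : ℕ} (w₀ w : E n) :
    deriv (fun s : ℝ => w₀ + s • w) = fun _ => w := by
  funext t
  simpa using (((hasDerivAt_id t).smul_const w).const_add w₀).deriv

/-- The square root `f` of a quadratic polynomial satisfies `(f')² + f'' f = k` at any point where
the polynomial is positive, `k` being its leading coefficient. -/
theorem sqrt_quadratic_deriv (a b k : ℝ) (f : ℝ → ℝ)
    (hf : ∀ t, f t = Real.sqrt (a + b * t + k * t ^ 2)) (t : ℝ)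
    (ht : 0 < a + b * t + k * t ^ 2) :
    (deriv f t) ^ 2 + deriv (deriv f) t * f t = k := by
  have hpoly : ∀ s, HasDerivAt (fun s : ℝ => a + b * s + k * s ^ 2) (b + 2 * k * s) s := by
    intro s
    have h := (((hasDerivAt_id s).const_mul b).const_add a).add
      (((hasDerivAt_id s).pow 2).const_mul k)
    refine h.congr_deriv ?_
    simp
    ring
  have hfun : f = fun s => Real.sqrt (a + b * s + k * s ^ 2) := funext hf
  have hderiv : ∀ s, 0 < a + b * s + k * s ^ 2 →
      HasDerivAt f ((b + 2 * k * s) / (2 * f s)) s := by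
    intro s hs
    rw [hf s, hfun]
    exact (hpoly s).sqrt (ne_of_gt hs)
  -- The formula for `f'` holds on a neighbourhood, so it may be differentiated at `t`.
  have hev : deriv f =ᶠ[nhds t] fun s => (b + 2 * k * s) / (2 * f s) := by
    have hcont : Continuous fun s : ℝ => a + b * s + k * s ^ 2 := by fun_prop
    filter_upwards [hcont.continuousAt.eventually (lt_mem_nhds ht)] with s hs
    exact (hderiv s hs).deriv
  have hft : f t ≠ 0 := by
    rw [hf t]
    exact (Real.sqrt_pos.mpr ht).ne'
  have hnum : HasDerivAt (fun s : ℝ => b + 2 * k * s) (2 * k) t := by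
    simpa using ((hasDerivAt_id t).const_mul (2 * k)).const_add b
  have hquot := hnum.div ((hderiv t ht).const_mul 2) (mul_ne_zero two_ne_zero hft)
  have hsecond : deriv (deriv f) t = _ := hev.deriv_eq.trans hquot.deriv
  rw [hsecond, (hderiv t ht).deriv]
  field_simp
  ring

/-- Curves cut on the totally geodesic quadrics by vertical 2-planes are pregeodesics:
with `f(t) = √(c − ‖u₀ + tu − x₀‖² + ‖v₀ + tv − y₀‖²)` on an open interval where the radicand
is positive, (i) `(f′)² + f″ f = −‖u‖² + ‖v‖²`, and (ii) the curve
`γ(t) = (u₀ + tu, v₀ + tv, f(t))` satisfies the pregeodesic equations with factor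
`λ(t) = −2f′(t)/f(t)`. -/
theorem stmt6 (p q : ℕ) (hp : 1 ≤ p)
    (x₀ u₀ u : E (p - 1)) (y₀ v₀ v : E q) (c : ℝ)
    (I : Set ℝ) (hI : IsOpen I)
    (hpos : ∀ t ∈ I, 0 < c - ‖u₀ + t • u - x₀‖ ^ 2 + ‖v₀ + t • v - y₀‖ ^ 2)
    (f : ℝ → ℝ)
    (hf : ∀ t, f t = Real.sqrt (c - ‖u₀ + t • u - x₀‖ ^ 2 + ‖v₀ + t • v - y₀‖ ^ 2)) :
    (∀ t ∈ I, (deriv f t) ^ 2 + deriv (deriv f) t * f t = -‖u‖ ^ 2 + ‖v‖ ^ 2) ∧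
    (∀ t ∈ I,
      deriv (deriv fun s : ℝ => u₀ + s • u) t
          - (2 * deriv f t / f t) • deriv (fun s : ℝ => u₀ + s • u) t
        = (-(2 * deriv f t / f t)) • deriv (fun s : ℝ => u₀ + s • u) t ∧
      deriv (deriv fun s : ℝ => v₀ + s • v) t
          - (2 * deriv f t / f t) • deriv (fun s : ℝ => v₀ + s • v) t
        = (-(2 * deriv f t / f t)) • deriv (fun s : ℝ => v₀ + s • v) t ∧
      deriv (deriv f) t
          + (‖deriv (fun s : ℝ => u₀ + s • u) t‖ ^ 2
              - ‖deriv (fun s : ℝ => v₀ + s • v) t‖ ^ 2 - (deriv f t) ^ 2) / f t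
        = (-(2 * deriv f t / f t)) * deriv f t) := by
  have hrad : ∀ t : ℝ, c - ‖u₀ + t • u - x₀‖ ^ 2 + ‖v₀ + t • v - y₀‖ ^ 2 =
      (c - ‖u₀ - x₀‖ ^ 2 + ‖v₀ - y₀‖ ^ 2)
        + (2 * ⟪v₀ - y₀, v⟫ - 2 * ⟪u₀ - x₀, u⟫) * t + (-‖u‖ ^ 2 + ‖v‖ ^ 2) * t ^ 2 := by
    intro t
    rw [norm_line_sq, norm_line_sq]
    ring
  have key : ∀ t ∈ I,
      (deriv f t) ^ 2 + deriv (deriv f) t * f t = -‖u‖ ^ 2 + ‖v‖ ^ 2 := by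
    intro t ht
    exact sqrt_quadratic_deriv _ _ _ f (fun s => (hf s).trans (congrArg Real.sqrt (hrad s))) t
      ((hpos t ht).trans_eq (hrad t))
  refine ⟨key, fun t ht => ?_⟩
  have hft : f t ≠ 0 := by
    rw [hf t]
    exact (Real.sqrt_pos.mpr (hpos t ht)).ne'
  rw [deriv_line, deriv_line]
  refine ⟨by simp, by simp, ?_⟩
  field_simp
  linear_combination key t ht
end
end

section
/- Lightlike geodesics in the half-space model are straight lines: let (u, v, w) ∈ ℝ^{p−1} × ℝ^q × ℝ satisfy ‖u‖² − ‖v‖² + w² = 0. (i) If w > 0, then for any (x₀, y₀) ∈ ℝ^{p−1} × ℝ^q the curve γ(t) = (x₀ + u/t, y₀ + v/t, w/t), defined on (0, +∞), takes values in ℋ^{p,q}, satisfies the geodesic equations of g, and g_{γ(t)}(γ′(t), γ′(t)) = 0 for all t. (ii) If w = 0, then for any (x₀, y₀, z₀) with z₀ > 0 the curve γ(t) = (x₀ + tu, y₀ + tv, z₀), defined on all of ℝ, satisfies the geodesic equations of g and g_{γ(t)}(γ′(t), γ′(t)) = 0 for all t. -/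
/-!
Everything reduces to explicit derivatives. Along `c + s⁻¹ • a` the first two derivatives at `t > 0`
are `-(t²)⁻¹ • a` and `2 (t³)⁻¹ • a` (`deriv_add_inv_smul`, `deriv_deriv_add_inv_smul`); the height
`w / s` is the case `c = 0`, `a = w` in `ℝ`. Hence `2 z' / z = -2 / t`, which gives the equations for
`x` and `y`, while the equation for `z` and the vanishing of `g(γ', γ')` follow from
`‖u‖² - ‖v‖² = -w²`. On the horizontal lines all second derivatives and `z'` vanish, and
`‖u‖² = ‖v‖²`.
-/

open scoped RealInnerProductSpace

noncomputable section

section Derivatives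

variable {F : Type*} [NormedAddCommGroup F] [NormedSpace ℝ F]

theorem deriv_add_inv_smul (c a : F) {t : ℝ} (ht : t ≠ 0) :
    deriv (fun s : ℝ => c + s⁻¹ • a) t = (-(t ^ 2)⁻¹) • a :=
  (((hasDerivAt_inv ht).smul_const a).const_add c).deriv

theorem deriv_deriv_add_inv_smul (c a : F) {t : ℝ} (ht : t ≠ 0) :
    deriv (deriv fun s : ℝ => c + s⁻¹ • a) t = (2 * (t ^ 3)⁻¹) • a := by
  -- The formula for the first derivative is only used near `t`, away from the pole at `0`.
  have hev : (deriv fun s : ℝ => c + s⁻¹ • a) =ᶠ[nhds t] fun s => (-(s ^ 2)⁻¹) • a := by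
    filter_upwards [isOpen_ne.mem_nhds ht] with s hs
    exact deriv_add_inv_smul c a hs
  rw [hev.deriv_eq]
  have h := ((((hasDerivAt_id t).pow 2).inv (pow_ne_zero 2 ht)).neg).smul_const a
  refine h.deriv.trans ?_
  congr 1
  simp only [id, Pi.pow_apply]
  field_simp
  norm_num [mul_comm]

theorem deriv_add_smul (c a : F) :
    (deriv fun s : ℝ => c + s • a) = fun _ => a := by
  funext t
  simpa using (((hasDerivAt_id t).smul_const a).const_add c).deriv

end Derivatives

/-- Lightlike geodesics in the half-space model are straight lines: for a lightlike vector
`(u, v, w)` (i.e. `‖u‖² − ‖v‖² + w² = 0`), (i) if `w > 0` the curve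
`γ(t) = (x₀ + u/t, y₀ + v/t, w/t)` on `(0, ∞)` takes values in the half-space, satisfies
the geodesic equations, and is lightlike; (ii) if `w = 0` the horizontal line
`γ(t) = (x₀ + tu, y₀ + tv, z₀)` satisfies the geodesic equations and is lightlike. -/
theorem stmt7 (p q : ℕ) (hp : 1 ≤ p)
    (u : E (p - 1)) (v : E q) (w : ℝ)
    (hlight : ‖u‖ ^ 2 - ‖v‖ ^ 2 + w ^ 2 = 0) :
    (0 < w → ∀ (x₀ : E (p - 1)) (y₀ : E q), ∀ t ∈ Set.Ioi (0 : ℝ),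
      (0 < w / t ∧
       deriv (deriv fun s : ℝ => x₀ + s⁻¹ • u) t
         = (2 * deriv (fun s : ℝ => w / s) t / (w / t)) • deriv (fun s : ℝ => x₀ + s⁻¹ • u) t ∧
       deriv (deriv fun s : ℝ => y₀ + s⁻¹ • v) t
         = (2 * deriv (fun s : ℝ => w / s) t / (w / t)) • deriv (fun s : ℝ => y₀ + s⁻¹ • v) t ∧
       deriv (deriv fun s : ℝ => w / s) t
           + (‖deriv (fun s : ℝ => x₀ + s⁻¹ • u) t‖ ^ 2
               - ‖deriv (fun s : ℝ => y₀ + s⁻¹ • v) t‖ ^ 2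
               - (deriv (fun s : ℝ => w / s) t) ^ 2) / (w / t) = 0 ∧
       (‖deriv (fun s : ℝ => x₀ + s⁻¹ • u) t‖ ^ 2
           - ‖deriv (fun s : ℝ => y₀ + s⁻¹ • v) t‖ ^ 2
           + (deriv (fun s : ℝ => w / s) t) ^ 2) / (w / t) ^ 2 = 0)) ∧
    (w = 0 → ∀ (x₀ : E (p - 1)) (y₀ : E q) (z₀ : ℝ), 0 < z₀ → ∀ t : ℝ,
      (deriv (deriv fun s : ℝ => x₀ + s • u) t
         = (2 * deriv (fun _ : ℝ => z₀) t / z₀) • deriv (fun s : ℝ => x₀ + s • u) t ∧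
       deriv (deriv fun s : ℝ => y₀ + s • v) t
         = (2 * deriv (fun _ : ℝ => z₀) t / z₀) • deriv (fun s : ℝ => y₀ + s • v) t ∧
       deriv (deriv fun _ : ℝ => z₀) t
           + (‖deriv (fun s : ℝ => x₀ + s • u) t‖ ^ 2
               - ‖deriv (fun s : ℝ => y₀ + s • v) t‖ ^ 2
               - (deriv (fun _ : ℝ => z₀) t) ^ 2) / z₀ = 0 ∧
       (‖deriv (fun s : ℝ => x₀ + s • u) t‖ ^ 2
           - ‖deriv (fun s : ℝ => y₀ + s • v) t‖ ^ 2
           + (deriv (fun _ : ℝ => z₀) t) ^ 2) / z₀ ^ 2 = 0)) := by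
  refine ⟨fun hw x₀ y₀ t ht => ?_, fun hw x₀ y₀ z₀ hz t => ?_⟩
  · have ht0 : 0 < t := ht
    have htn : t ≠ 0 := ht0.ne'
    have hwn : w ≠ 0 := hw.ne'
    have hz : (fun s : ℝ => w / s) = fun s : ℝ => (0 : ℝ) + s⁻¹ • w := by
      funext s
      simp [div_eq_inv_mul]
    have hsq : ∀ {n : ℕ} (a : E n), ‖(-(t ^ 2)⁻¹) • a‖ ^ 2 = (t ^ 4)⁻¹ * ‖a‖ ^ 2 := by
      intro n a
      rw [norm_smul, mul_pow, Real.norm_eq_abs, sq_abs]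
      congr 1
      field_simp
    have hu : ‖u‖ ^ 2 = ‖v‖ ^ 2 - w ^ 2 := by linarith
    rw [hz]
    simp only [deriv_add_inv_smul _ _ htn, deriv_deriv_add_inv_smul _ _ htn, hsq, smul_smul, hu]
    simp only [smul_eq_mul]
    refine ⟨div_pos hw ht0, ?_, ?_, ?_, ?_⟩
    · congr 1
      field_simp
    · congr 1
      field_simp
    · field_simp
      ring
    · field_simp
      ring
  · subst hw
    have hu : ‖u‖ ^ 2 = ‖v‖ ^ 2 := by linarith
    simp only [deriv_add_smul, deriv_const', hu]
    simp
end
end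

section
/- Timelike geodesics are incomplete hyperbola branches of total length π: assume q ≥ 1, fix (x₀, y₀) ∈ ℝ^{p−1} × ℝ^q and a unit vector e ∈ ℝ^q, and let γ(t) = (x₀, y₀ + sinh(t)e, cosh(t)) for t ∈ ℝ. Then (i) γ satisfies the pregeodesic equations of g with factor λ(t) = −tanh(t); (ii) g_{γ(t)}(γ′(t), γ′(t)) = −1/cosh²(t) < 0 for all t (γ is timelike); and (iii) the total length ∫_{−∞}^{+∞} √(|g_{γ(t)}(γ′(t), γ′(t))|) dt = ∫_{−∞}^{+∞} dt/cosh(t) = π is finite. -/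
/-!
The derivatives of the curve are `y' = cosh t • e`, `y'' = sinh t • e`, `z' = sinh t`,
`z'' = cosh t`, so the pregeodesic equations and the value of `g(γ', γ')` follow from
`‖e‖ = 1` and `cosh² - sinh² = 1`. The speed is therefore `1 / cosh t`, and the substitution
`u = sinh t` turns the length into `∫ du / (1 + u²) = π` (`integral_one_div_cosh`).
-/

open scoped RealInnerProductSpace
open MeasureTheory

noncomputable section

/-- Change of variables `u = sinh t`, reducing to `∫ du / (1 + u²)`. -/
theorem integral_one_div_cosh : (∫ t : ℝ, 1 / Real.cosh t) = Real.pi := by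
  have h := integral_image_eq_integral_abs_deriv_smul (s := Set.univ) (f := Real.sinh)
    (f' := Real.cosh) MeasurableSet.univ
    (fun x _ => (Real.hasDerivAt_sinh x).hasDerivWithinAt)
    Real.sinh_injective.injOn (fun u : ℝ => (1 + u ^ 2)⁻¹)
  rw [Set.image_univ, Real.sinh_surjective.range_eq] at h
  simp only [Measure.restrict_univ] at h
  rw [integral_univ_inv_one_add_sq] at h
  rw [h]
  congr 1
  funext t
  have hc := Real.cosh_pos t
  have hs : 1 + Real.sinh t ^ 2 = Real.cosh t ^ 2 := by
    rw [Real.cosh_sq]; ring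
  rw [hs, abs_of_pos hc, smul_eq_mul]
  field_simp

/-- Timelike geodesics are incomplete hyperbola branches of total length `π`:
the curve `γ(t) = (x₀, y₀ + sinh(t)e, cosh(t))` satisfies (i) the pregeodesic equations
with factor `λ(t) = −tanh(t)`; (ii) it is timelike with
`g(γ′, γ′) = −1/cosh²(t) < 0`; (iii) its total length is
`∫ √|g(γ′, γ′)| dt = ∫ dt/cosh(t) = π`. -/
theorem stmt8 (p q : ℕ) (hp : 1 ≤ p) (hq : 1 ≤ q)
    (x₀ : E (p - 1)) (y₀ : E q) (e : E q) (he : ‖e‖ = 1) :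
    (∀ t : ℝ,
      deriv (deriv fun _ : ℝ => x₀) t
          - (2 * deriv Real.cosh t / Real.cosh t) • deriv (fun _ : ℝ => x₀) t
        = (-Real.tanh t) • deriv (fun _ : ℝ => x₀) t ∧
      deriv (deriv fun s : ℝ => y₀ + Real.sinh s • e) t
          - (2 * deriv Real.cosh t / Real.cosh t) • deriv (fun s : ℝ => y₀ + Real.sinh s • e) t
        = (-Real.tanh t) • deriv (fun s : ℝ => y₀ + Real.sinh s • e) t ∧
      deriv (deriv Real.cosh) t
          + (‖deriv (fun _ : ℝ => x₀) t‖ ^ 2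
              - ‖deriv (fun s : ℝ => y₀ + Real.sinh s • e) t‖ ^ 2
              - (deriv Real.cosh t) ^ 2) / Real.cosh t
        = (-Real.tanh t) * deriv Real.cosh t) ∧
    (∀ t : ℝ,
      (‖deriv (fun _ : ℝ => x₀) t‖ ^ 2
          - ‖deriv (fun s : ℝ => y₀ + Real.sinh s • e) t‖ ^ 2
          + (deriv Real.cosh t) ^ 2) / (Real.cosh t) ^ 2
        = -(1 / (Real.cosh t) ^ 2) ∧
      (‖deriv (fun _ : ℝ => x₀) t‖ ^ 2
          - ‖deriv (fun s : ℝ => y₀ + Real.sinh s • e) t‖ ^ 2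
          + (deriv Real.cosh t) ^ 2) / (Real.cosh t) ^ 2 < 0) ∧
    (∫ t : ℝ, Real.sqrt |(‖deriv (fun _ : ℝ => x₀) t‖ ^ 2
          - ‖deriv (fun s : ℝ => y₀ + Real.sinh s • e) t‖ ^ 2
          + (deriv Real.cosh t) ^ 2) / (Real.cosh t) ^ 2|) = Real.pi ∧
    (∫ t : ℝ, 1 / Real.cosh t) = Real.pi := by
  have hx : deriv (fun _ : ℝ => x₀) = fun _ => 0 := by
    funext t
    simp
  have hy : deriv (fun s : ℝ => y₀ + Real.sinh s • e) = fun s => Real.cosh s • e := by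
    funext t
    exact (((Real.hasDerivAt_sinh t).smul_const e).const_add y₀).deriv
  have hyy : deriv (fun s : ℝ => Real.cosh s • e) = fun s => Real.sinh s • e := by
    funext t
    exact ((Real.hasDerivAt_cosh t).smul_const e).deriv
  have hg : ∀ t : ℝ, (‖deriv (fun _ : ℝ => x₀) t‖ ^ 2
      - ‖deriv (fun s : ℝ => y₀ + Real.sinh s • e) t‖ ^ 2
      + (deriv Real.cosh t) ^ 2) / (Real.cosh t) ^ 2 = -(1 / (Real.cosh t) ^ 2) := by
    intro t
    have hc := Real.cosh_pos t
    rw [hx, hy, Real.deriv_cosh, norm_smul, he, Real.norm_of_nonneg hc.le, ← neg_div]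
    congr 1
    rw [norm_zero, mul_one, Real.cosh_sq]
    ring
  refine ⟨fun t => ⟨?_, ?_, ?_⟩, fun t => ⟨hg t, ?_⟩, ?_, integral_one_div_cosh⟩
  · simp [hx]
  · have hc := (Real.cosh_pos t).ne'
    rw [hy, hyy, Real.deriv_cosh, Real.tanh_eq_sinh_div_cosh]
    simp only [smul_smul, ← sub_smul]
    congr 1
    field_simp
    ring
  · have hc := Real.cosh_pos t
    rw [hx, hy, Real.deriv_cosh, Real.deriv_sinh, norm_smul, he, Real.norm_of_nonneg hc.le,
      Real.tanh_eq_sinh_div_cosh, norm_zero]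
    field_simp
    ring
  · rw [hg t]
    have hc := Real.cosh_pos t
    exact neg_neg_of_pos (by positivity)
  · rw [← integral_one_div_cosh]
    congr 1
    funext t
    have hc := Real.cosh_pos t
    rw [hg t, abs_neg, abs_of_pos (by positivity), Real.sqrt_div zero_le_one, Real.sqrt_one,
      Real.sqrt_sq hc.le]
end
end

section
/- Spacelike hyperbola branches are geodesics of infinite length towards the boundary and finite length at the upper end: assume q ≥ 1, fix (x₀, y₀) ∈ ℝ^{p−1} × ℝ^q and a unit vector e ∈ ℝ^q, and let γ(t) = (x₀, y₀ + cosh(t)e, sinh(t)) for t ∈ (0, +∞). Then (i) γ takes values in ℋ^{p,q} and satisfies the pregeodesic equations of g with factor λ(t) = −coth(t); (ii) g_{γ(t)}(γ′(t), γ′(t)) = 1/sinh²(t) > 0 for all t > 0 (γ is spacelike); (iii) for 0 < t₀ < t₁, ∫_{t₀}^{t₁} √(g_{γ(t)}(γ′(t), γ′(t))) dt = log(tanh(t₁/2)) − log(tanh(t₀/2)); consequently this length tends to +∞ as t₀ → 0⁺ (with t₁ fixed) and remains bounded as t₁ → +∞ (with t₀ fixed). -/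
/-!
The velocity of the curve is `(0, sinh t • e, cosh t)` and its second derivative is
`(0, cosh t • e, sinh t)`, so the pregeodesic equations are rational identities in `sinh t` and
`cosh t`, and `cosh² - sinh² = 1` makes the metric square of the velocity equal to `1 / sinh² t`.
The length density `1 / sinh t` has primitive `log (tanh (t / 2))` on `(0, ∞)`
(`hasDerivAt_log_tanh_half`), which gives the length formula. This primitive tends to `-∞` at `0⁺`
(`tendsto_log_tanh_half`) and is bounded above by `0` since `tanh < 1`.
-/

open scoped RealInnerProductSpace
open MeasureTheory Filter

noncomputable section

theorem tanh_half_pos {t : ℝ} (ht : 0 < t) : 0 < Real.tanh (t / 2) := by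
  rw [Real.tanh_eq_sinh_div_cosh]
  exact div_pos (Real.sinh_pos_iff.2 (by linarith)) (Real.cosh_pos _)

/-- The primitive of the length density; the half-angle is absorbed by
`sinh t = 2 sinh (t / 2) cosh (t / 2)`. -/
theorem hasDerivAt_log_tanh_half {t : ℝ} (ht : 0 < t) :
    HasDerivAt (fun s : ℝ => Real.log (Real.tanh (s / 2))) (1 / Real.sinh t) t := by
  have hs : 0 < Real.sinh (t / 2) := Real.sinh_pos_iff.2 (by linarith)
  have hc : 0 < Real.cosh (t / 2) := Real.cosh_pos _
  have h2 : HasDerivAt (fun s : ℝ => s / 2) (1 / 2) t := (hasDerivAt_id t).div_const 2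
  have h := ((h2.sinh.div h2.cosh hc.ne').log (div_pos hs hc).ne')
  have hd : Real.sinh t = 2 * Real.sinh (t / 2) * Real.cosh (t / 2) := by
    rw [← Real.sinh_two_mul]; congr 1; ring
  have hfun : (fun s : ℝ => Real.log (Real.tanh (s / 2)))
      = fun s : ℝ => Real.log (Real.sinh (s / 2) / Real.cosh (s / 2)) := by
    funext s; rw [Real.tanh_eq_sinh_div_cosh]
  rw [hfun, hd]
  refine h.congr_deriv ?_
  have h1 := Real.cosh_sq (t / 2)
  simp only [Pi.div_apply]
  field_simp
  linarith

theorem integral_inv_sinh {a b : ℝ} (ha : 0 < a) (hab : a < b) :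
    ∫ t in a..b, 1 / Real.sinh t
      = Real.log (Real.tanh (b / 2)) - Real.log (Real.tanh (a / 2)) := by
  have hpos : ∀ t ∈ Set.uIcc a b, 0 < t := fun t ht => by
    rw [Set.uIcc_of_le hab.le] at ht; exact ha.trans_le ht.1
  refine intervalIntegral.integral_eq_sub_of_hasDerivAt
    (fun t ht => hasDerivAt_log_tanh_half (hpos t ht)) ?_
  refine ContinuousOn.intervalIntegrable ?_
  exact continuousOn_const.div Real.continuous_sinh.continuousOn
    fun t ht => (Real.sinh_pos_iff.2 (hpos t ht)).ne'

theorem tendsto_log_tanh_half :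
    Tendsto (fun t : ℝ => Real.log (Real.tanh (t / 2))) (nhdsWithin 0 (Set.Ioi 0)) atBot := by
  refine Real.tendsto_log_nhdsGT_zero.comp (tendsto_nhdsWithin_iff.2 ⟨?_, ?_⟩)
  · have hc : Continuous fun t : ℝ => Real.tanh (t / 2) := by
      simp only [Real.tanh_eq_sinh_div_cosh]
      exact (Real.continuous_sinh.comp (continuous_id.div_const 2)).div
        (Real.continuous_cosh.comp (continuous_id.div_const 2)) fun t => (Real.cosh_pos _).ne'
    have h := hc.tendsto 0
    simp only [zero_div, Real.tanh_zero] at h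
    exact h.mono_left nhdsWithin_le_nhds
  · filter_upwards [self_mem_nhdsWithin] with t ht using tanh_half_pos ht

theorem deriv_hyperbola {n : ℕ} (y₀ e : E n) :
    deriv (fun s : ℝ => y₀ + Real.cosh s • e) = fun s => Real.sinh s • e := by
  funext s
  exact (((Real.hasDerivAt_cosh s).smul_const e).const_add y₀).deriv

/-- Spacelike hyperbola branches are geodesics of infinite length towards the boundary
and finite length at the upper end: the curve `γ(t) = (x₀, y₀ + cosh(t)e, sinh(t))` on
`(0, ∞)` (i) takes values in the half-space and satisfies the pregeodesic equations with
factor `λ(t) = −coth(t)`; (ii) is spacelike with `g(γ′, γ′) = 1/sinh²(t) > 0`;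
(iii) its length from `t₀` to `t₁` equals `log(tanh(t₁/2)) − log(tanh(t₀/2))`, which tends
to `+∞` as `t₀ → 0⁺` and remains bounded as `t₁ → +∞`. -/
theorem stmt9 (p q : ℕ) (hp : 1 ≤ p) (hq : 1 ≤ q)
    (x₀ : E (p - 1)) (y₀ : E q) (e : E q) (he : ‖e‖ = 1) :
    (∀ t ∈ Set.Ioi (0 : ℝ),
      0 < Real.sinh t ∧
      deriv (deriv fun _ : ℝ => x₀) t
          - (2 * deriv Real.sinh t / Real.sinh t) • deriv (fun _ : ℝ => x₀) t
        = (-(Real.cosh t / Real.sinh t)) • deriv (fun _ : ℝ => x₀) t ∧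
      deriv (deriv fun s : ℝ => y₀ + Real.cosh s • e) t
          - (2 * deriv Real.sinh t / Real.sinh t) • deriv (fun s : ℝ => y₀ + Real.cosh s • e) t
        = (-(Real.cosh t / Real.sinh t)) • deriv (fun s : ℝ => y₀ + Real.cosh s • e) t ∧
      deriv (deriv Real.sinh) t
          + (‖deriv (fun _ : ℝ => x₀) t‖ ^ 2
              - ‖deriv (fun s : ℝ => y₀ + Real.cosh s • e) t‖ ^ 2
              - (deriv Real.sinh t) ^ 2) / Real.sinh t
        = (-(Real.cosh t / Real.sinh t)) * deriv Real.sinh t) ∧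
    (∀ t ∈ Set.Ioi (0 : ℝ),
      (‖deriv (fun _ : ℝ => x₀) t‖ ^ 2
          - ‖deriv (fun s : ℝ => y₀ + Real.cosh s • e) t‖ ^ 2
          + (deriv Real.sinh t) ^ 2) / (Real.sinh t) ^ 2
        = 1 / (Real.sinh t) ^ 2 ∧
      0 < (‖deriv (fun _ : ℝ => x₀) t‖ ^ 2
          - ‖deriv (fun s : ℝ => y₀ + Real.cosh s • e) t‖ ^ 2
          + (deriv Real.sinh t) ^ 2) / (Real.sinh t) ^ 2) ∧
    (∀ t₀ t₁ : ℝ, 0 < t₀ → t₀ < t₁ →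
      (∫ t in t₀..t₁, Real.sqrt ((‖deriv (fun _ : ℝ => x₀) t‖ ^ 2
          - ‖deriv (fun s : ℝ => y₀ + Real.cosh s • e) t‖ ^ 2
          + (deriv Real.sinh t) ^ 2) / (Real.sinh t) ^ 2))
        = Real.log (Real.tanh (t₁ / 2)) - Real.log (Real.tanh (t₀ / 2))) ∧
    (∀ t₁ : ℝ, 0 < t₁ →
      Tendsto (fun t₀ : ℝ =>
          ∫ t in t₀..t₁, Real.sqrt ((‖deriv (fun _ : ℝ => x₀) t‖ ^ 2
            - ‖deriv (fun s : ℝ => y₀ + Real.cosh s • e) t‖ ^ 2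
            + (deriv Real.sinh t) ^ 2) / (Real.sinh t) ^ 2))
        (nhdsWithin 0 (Set.Ioi 0)) atTop) ∧
    (∀ t₀ : ℝ, 0 < t₀ → ∃ M : ℝ, ∀ t₁ : ℝ, t₀ < t₁ →
      (∫ t in t₀..t₁, Real.sqrt ((‖deriv (fun _ : ℝ => x₀) t‖ ^ 2
          - ‖deriv (fun s : ℝ => y₀ + Real.cosh s • e) t‖ ^ 2
          + (deriv Real.sinh t) ^ 2) / (Real.sinh t) ^ 2)) ≤ M) := by
  have hx : ∀ t : ℝ, deriv (fun _ : ℝ => x₀) t = 0 := fun t => deriv_const t x₀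
  have hx2 : ∀ t : ℝ, deriv (deriv fun _ : ℝ => x₀) t = 0 := fun t => by
    rw [funext hx]; exact deriv_const t 0
  have hy2 : ∀ t : ℝ, deriv (fun s : ℝ => Real.sinh s • e) t = Real.cosh t • e := fun t =>
    ((Real.hasDerivAt_sinh t).smul_const e).deriv
  have hn : ∀ t : ℝ, ‖Real.sinh t • e‖ ^ 2 = Real.sinh t ^ 2 := fun t => by
    rw [norm_smul, he, mul_one, Real.norm_eq_abs, sq_abs]
  have hnum : ∀ t : ℝ, ‖(0 : E (p - 1))‖ ^ 2 - Real.sinh t ^ 2 + Real.cosh t ^ 2 = 1 := fun t => by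
    rw [norm_zero, Real.cosh_sq]; ring
  simp only [hx2, hx, deriv_hyperbola, hy2, hn, Real.deriv_sinh, Real.deriv_cosh, hnum]
  have hlen : ∀ a b : ℝ, 0 < a → a < b →
      ∫ t in a..b, Real.sqrt (1 / Real.sinh t ^ 2)
        = Real.log (Real.tanh (b / 2)) - Real.log (Real.tanh (a / 2)) := fun a b ha hab => by
    rw [← integral_inv_sinh ha hab]
    refine intervalIntegral.integral_congr fun t ht => ?_
    rw [Set.uIcc_of_le hab.le] at ht
    have hs : 0 < Real.sinh t := Real.sinh_pos_iff.2 (ha.trans_le ht.1)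
    rw [Real.sqrt_div zero_le_one, Real.sqrt_one, Real.sqrt_sq hs.le]
  refine ⟨fun t ht => ?_, fun t ht => ?_, hlen, fun t₁ ht₁ => ?_, fun t₀ ht₀ => ?_⟩
  · have hs : 0 < Real.sinh t := Real.sinh_pos_iff.2 ht
    refine ⟨hs, by simp, ?_, ?_⟩
    · rw [smul_smul, smul_smul, ← sub_smul]
      congr 1
      field_simp
      ring
    · rw [norm_zero]
      field_simp
      ring
  · have hs : 0 < Real.sinh t := Real.sinh_pos_iff.2 ht
    exact ⟨trivial, by positivity⟩
  · refine (tendsto_atTop_add_const_left _ (Real.log (Real.tanh (t₁ / 2)))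
      (tendsto_neg_atBot_atTop.comp tendsto_log_tanh_half)).congr' ?_
    -- The length formula needs `t₀ < t₁`, which holds near `0⁺`.
    filter_upwards [Ioo_mem_nhdsGT ht₁] with t ht
    rw [hlen t t₁ ht.1 ht.2]
    simp [sub_eq_add_neg]
  · refine ⟨-Real.log (Real.tanh (t₀ / 2)), fun t₁ h => ?_⟩
    rw [hlen t₀ t₁ ht₀ h]
    have := Real.log_nonpos (tanh_half_pos (ht₀.trans h)).le (Real.tanh_lt_one (t₁ / 2)).le
    linarith
end
end

section
/- Parabolas along degenerate directions are complete unit-speed spacelike geodesics: assume q ≥ 1, and let (u, v) ∈ ℝ^{p−1} × ℝ^q with ‖u‖ = ‖v‖ and (u, v) ≠ (0, 0), let A ≠ 0 be a real number, and (x₀, y₀) ∈ ℝ^{p−1} × ℝ^q. Then the curve γ(t) = (x₀ − (e^{2t}/(2A))u, y₀ − (e^{2t}/(2A))v, e^t), defined for all t ∈ ℝ, satisfies the geodesic equations of g, and g_{γ(t)}(γ′(t), γ′(t)) = 1 for all t. -/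
/-!
Both horizontal components have the form `c - (e^{2s}/(2A)) w`, whose derivative is
`-(e^{2s}/A) w` and whose second derivative is twice that, which gives the first two equations
because `z'/z = 1` for `z = exp`. Since `‖u‖ = ‖v‖`, the horizontal velocity is null, so the last
two identities reduce to those of the vertical curve `exp`.
-/

open scoped RealInnerProductSpace

noncomputable section

theorem deriv_parabola {n : ℕ} (A : ℝ) (c w : E n) :
    deriv (fun s : ℝ => c - (Real.exp (2 * s) / (2 * A)) • w)
      = fun s => -((Real.exp (2 * s) / A) • w) := by
  funext s
  have h : HasDerivAt (fun s : ℝ => Real.exp (2 * s)) (Real.exp (2 * s) * (2 * 1)) s :=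
    ((hasDerivAt_id s).const_mul 2).exp
  have h2 := ((h.div_const (2 * A)).smul_const w).const_sub c
  rw [h2.deriv]
  congr 2
  rw [mul_one, mul_comm, mul_div_mul_left _ _ two_ne_zero]

theorem deriv_deriv_parabola {n : ℕ} (A : ℝ) (c w : E n) (t : ℝ) :
    deriv (deriv fun s : ℝ => c - (Real.exp (2 * s) / (2 * A)) • w) t
      = (2 : ℝ) • deriv (fun s : ℝ => c - (Real.exp (2 * s) / (2 * A)) • w) t := by
  rw [deriv_parabola]
  have h : HasDerivAt (fun s : ℝ => Real.exp (2 * s)) (Real.exp (2 * t) * (2 * 1)) t :=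
    ((hasDerivAt_id t).const_mul 2).exp
  have h2 := ((h.div_const A).smul_const w).neg
  refine h2.deriv.trans ?_
  rw [smul_neg, smul_smul]
  congr 2
  ring

/-- Parabolas along degenerate directions are complete unit-speed spacelike geodesics:
for `(u, v)` with `‖u‖ = ‖v‖`, `(u, v) ≠ (0, 0)`, and `A ≠ 0`, the curve
`γ(t) = (x₀ − (e^{2t}/(2A))u, y₀ − (e^{2t}/(2A))v, eᵗ)`, defined for all `t ∈ ℝ`, satisfies
the geodesic equations of the half-space metric and `g(γ′(t), γ′(t)) = 1` for all `t`. -/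
theorem stmt11 (p q : ℕ) (hp : 1 ≤ p) (hq : 1 ≤ q)
    (u : E (p - 1)) (v : E q) (huv : ‖u‖ = ‖v‖) (hne : (u, v) ≠ (0, 0))
    (A : ℝ) (hA : A ≠ 0) (x₀ : E (p - 1)) (y₀ : E q) :
    ∀ t : ℝ,
      deriv (deriv fun s : ℝ => x₀ - (Real.exp (2 * s) / (2 * A)) • u) t
        = (2 * deriv Real.exp t / Real.exp t) •
            deriv (fun s : ℝ => x₀ - (Real.exp (2 * s) / (2 * A)) • u) t ∧
      deriv (deriv fun s : ℝ => y₀ - (Real.exp (2 * s) / (2 * A)) • v) t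
        = (2 * deriv Real.exp t / Real.exp t) •
            deriv (fun s : ℝ => y₀ - (Real.exp (2 * s) / (2 * A)) • v) t ∧
      deriv (deriv Real.exp) t
          + (‖deriv (fun s : ℝ => x₀ - (Real.exp (2 * s) / (2 * A)) • u) t‖ ^ 2
              - ‖deriv (fun s : ℝ => y₀ - (Real.exp (2 * s) / (2 * A)) • v) t‖ ^ 2
              - (deriv Real.exp t) ^ 2) / Real.exp t = 0 ∧
      (‖deriv (fun s : ℝ => x₀ - (Real.exp (2 * s) / (2 * A)) • u) t‖ ^ 2
          - ‖deriv (fun s : ℝ => y₀ - (Real.exp (2 * s) / (2 * A)) • v) t‖ ^ 2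
          + (deriv Real.exp t) ^ 2) / (Real.exp t) ^ 2 = 1 := by
  intro t
  have hz : Real.exp t ≠ 0 := Real.exp_ne_zero t
  have hlog : 2 * deriv Real.exp t / Real.exp t = 2 := by
    rw [Real.deriv_exp]
    field_simp
  have hnull : ‖deriv (fun s : ℝ => x₀ - (Real.exp (2 * s) / (2 * A)) • u) t‖
      = ‖deriv (fun s : ℝ => y₀ - (Real.exp (2 * s) / (2 * A)) • v) t‖ := by
    simp only [deriv_parabola, norm_neg, norm_smul, huv]
  refine ⟨?_, ?_, ?_, ?_⟩
  · rw [hlog, deriv_deriv_parabola]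
  · rw [hlog, deriv_deriv_parabola]
  · rw [hnull, Real.deriv_exp, Real.deriv_exp]
    field_simp
    ring
  · rw [hnull, Real.deriv_exp]
    field_simp
    ring
end
end

section
/- Horospheres with point at infinity on the boundary hyperplane are piecewise quadric hypersurfaces: let V = e_p + e_{p+q+1} ∈ ℝ^{p+q+1} (a null vector: ⟨V, V⟩ = 0). Then for every (x, y, z) ∈ ℋ^{p,q}, ⟨ι̃(x, y, z), V⟩ = −(h(x, y) + z²)/z; consequently, for every a > 0, a point (x, y, z) ∈ ℋ^{p,q} satisfies |⟨ι̃(x, y, z), V⟩| = a if and only if ‖x‖² − ‖y‖² + (z − a/2)² = a²/4 or ‖x‖² − ‖y‖² + (z + a/2)² = a²/4. -/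
open scoped RealInnerProductSpace

noncomputable section

/-- Horospheres with point at infinity on the boundary hyperplane are piecewise quadric
hypersurfaces: with `V = e_p + e_{p+q+1}` (a null vector),
`⟨ι̃(x,y,z), V⟩ = −(h(x,y) + z²)/z`, and for `a > 0`, `|⟨ι̃(x,y,z), V⟩| = a` iff
`‖x‖² − ‖y‖² + (z − a/2)² = a²/4` or `‖x‖² − ‖y‖² + (z + a/2)² = a²/4`. -/
theorem stmt16 (p q : ℕ) (hp : 1 ≤ p) :
    Mink p q ((0 : E (p - 1)), (1 : ℝ), (0 : E q), (1 : ℝ))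
      ((0 : E (p - 1)), (1 : ℝ), (0 : E q), (1 : ℝ)) = 0 ∧
    (∀ (x : E (p - 1)) (y : E q) (z : ℝ), 0 < z →
      Mink p q (iotaT p q (x, y, z)) ((0 : E (p - 1)), (1 : ℝ), (0 : E q), (1 : ℝ))
        = -((‖x‖ ^ 2 - ‖y‖ ^ 2) + z ^ 2) / z) ∧
    (∀ a : ℝ, 0 < a → ∀ (x : E (p - 1)) (y : E q) (z : ℝ), 0 < z →
      (|Mink p q (iotaT p q (x, y, z)) ((0 : E (p - 1)), (1 : ℝ), (0 : E q), (1 : ℝ))| = a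
        ↔ (‖x‖ ^ 2 - ‖y‖ ^ 2 + (z - a / 2) ^ 2 = a ^ 2 / 4 ∨
           ‖x‖ ^ 2 - ‖y‖ ^ 2 + (z + a / 2) ^ 2 = a ^ 2 / 4))) := by
  have key : ∀ (x : E (p - 1)) (y : E q) (z : ℝ), 0 < z →
      Mink p q (iotaT p q (x, y, z)) ((0 : E (p - 1)), (1 : ℝ), (0 : E q), (1 : ℝ))
        = -((‖x‖ ^ 2 - ‖y‖ ^ 2) + z ^ 2) / z := by
    intro x y z hz
    simp only [Mink, iotaT, inner_zero_right]
    field_simp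
    ring
  refine ⟨by simp [Mink], key, ?_⟩
  intro a ha x y z hz
  -- The pairing equal to `a` gives the quadric centred at height `-a/2`, the pairing equal
  -- to `-a` the one centred at height `a/2`: clear `z` and complete the square.
  rw [key x y z hz, abs_eq ha.le, div_eq_iff hz.ne', div_eq_iff hz.ne', or_comm]
  refine or_congr ?_ ?_ <;> constructor <;> intro h <;> linarith
end
end

section
/- The inversion 𝒥 corresponds, via the embedding ι̃, to the linear reflection in the hyperplane X_p = 0, up to sign: let f̃ : ℝ^{p+q+1} → ℝ^{p+q+1} be the linear map negating the p-th coordinate and fixing all others. Then for every (x, y, z) ∈ U with μ(x, y, z) > 0, ι̃(𝒥(x, y, z)) = f̃(ι̃(x, y, z)), and for every (x, y, z) ∈ U with μ(x, y, z) < 0, ι̃(𝒥(x, y, z)) = −f̃(ι̃(x, y, z)). -/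
/-!
Write `N = ‖x‖² − ‖y‖² + z²`, so `μ = N⁻¹`, and let `σ = ±1` be the sign of `μ`. The quadratic form
`N` takes the value `μ²N = μ` at `𝒥(x, y, z)`, and the last coordinate there is `σμz`. Hence the
components `x/z`, `y/z` get multiplied by `σ`, and `(1 ∓ N)/(2z)` becomes
`(1 ∓ μ)/(2σμz) = σ(N ∓ 1)/(2z)`. So `ι̃ ∘ 𝒥 = σ f̃ ∘ ι̃` (`iotaT_inversion`).
-/

open scoped RealInnerProductSpace

noncomputable section

/-- The domain `U = {(x, y, z) : z > 0, ‖x‖² − ‖y‖² + z² ≠ 0}` of the inversion. -/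
def invDomain (p q : ℕ) : Set (E (p - 1) × E q × ℝ) :=
  {P | 0 < P.2.2 ∧ ‖P.1‖ ^ 2 - ‖P.2.1‖ ^ 2 + P.2.2 ^ 2 ≠ 0}

/-- The factor `μ(x, y, z) = (‖x‖² − ‖y‖² + z²)⁻¹`. -/
def invFactor (p q : ℕ) (P : E (p - 1) × E q × ℝ) : ℝ :=
  (‖P.1‖ ^ 2 - ‖P.2.1‖ ^ 2 + P.2.2 ^ 2)⁻¹

/-- The inversion `𝒥(x, y, z) = (μx, μy, |μ|z)`. -/
def inversion (p q : ℕ) (P : E (p - 1) × E q × ℝ) : E (p - 1) × E q × ℝ :=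
  (invFactor p q P • P.1, invFactor p q P • P.2.1, |invFactor p q P| * P.2.2)

/-- The linear reflection `f̃` in the hyperplane `X_p = 0`: it negates the `p`-th
coordinate and fixes all the others. -/
def reflP (p q : ℕ) (X : E (p - 1) × ℝ × E q × ℝ) : E (p - 1) × ℝ × E q × ℝ :=
  (X.1, -X.2.1, X.2.2.1, X.2.2.2)

/-- The computation common to both signs: `σ` is the sign of `μ`, encoded by `σ² = 1` and
`|μ| = σμ`. -/
theorem iotaT_inversion (p q : ℕ) (P : E (p - 1) × E q × ℝ) (hP : P ∈ invDomain p q)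
    (σ : ℝ) (hσ : σ * σ = 1) (habs : |invFactor p q P| = σ * invFactor p q P) :
    iotaT p q (inversion p q P) = σ • reflP p q (iotaT p q P) := by
  obtain ⟨x, y, z⟩ := P
  obtain ⟨hz, hN⟩ := hP
  simp only at hz hN
  have hz0 : z ≠ 0 := hz.ne'
  have hσ0 : σ ≠ 0 := left_ne_zero_of_mul_eq_one hσ
  have hσinv : σ⁻¹ = σ := inv_eq_of_mul_eq_one_left hσ
  set m := invFactor p q (x, y, z) with hm
  have hm0 : m ≠ 0 := inv_ne_zero hN
  have hmN : m * (‖x‖ ^ 2 - ‖y‖ ^ 2 + z ^ 2) = 1 := inv_mul_cancel₀ hN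
  -- The form `h + z²` at the image point: `μ²(h + z²) = μ`.
  have hsq : (‖m • x‖ ^ 2 - ‖m • y‖ ^ 2) + (σ * m * z) ^ 2 = m := by
    simp only [norm_smul, mul_pow, Real.norm_eq_abs, sq_abs]
    linear_combination m * hmN + m ^ 2 * z ^ 2 * hσ
  have hscal : (σ * m * z)⁻¹ * m = σ * z⁻¹ := by
    rw [mul_inv, mul_inv, hσinv]
    field_simp
  -- Division by `|μ|z` is multiplication by `σ(h + z²)/z`.
  have hdiv : ∀ a b : ℝ, a = m * b → a / (2 * (σ * m * z)) = σ * (b / (2 * z)) := by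
    rintro a b rfl
    rw [div_eq_iff (by positivity)]
    field_simp
    linear_combination -b * hσ
  simp only [iotaT, inversion, reflP, ← hm, habs, Prod.smul_mk, smul_smul, hscal, smul_eq_mul,
    Prod.mk.injEq, true_and]
  constructor
  · rw [← neg_div]
    apply hdiv
    linear_combination -hsq - hmN
  · apply hdiv
    linear_combination hsq - hmN

/-- The inversion `𝒥` corresponds, via the embedding `ι̃`, to the linear reflection in the
hyperplane `X_p = 0`, up to sign: `ι̃ ∘ 𝒥 = f̃ ∘ ι̃` where `μ > 0`, and
`ι̃ ∘ 𝒥 = −f̃ ∘ ι̃` where `μ < 0`. -/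
theorem stmt18 (p q : ℕ) (hp : 1 ≤ p) :
    (∀ P ∈ invDomain p q, 0 < invFactor p q P →
      iotaT p q (inversion p q P) = reflP p q (iotaT p q P)) ∧
    (∀ P ∈ invDomain p q, invFactor p q P < 0 →
      iotaT p q (inversion p q P) = -reflP p q (iotaT p q P)) := by
  constructor
  · intro P hP hpos
    simpa using iotaT_inversion p q P hP 1 (by norm_num) (by rw [abs_of_pos hpos, one_mul])
  · intro P hP hneg
    simpa using iotaT_inversion p q P hP (-1) (by norm_num) (by rw [abs_of_neg hneg, neg_one_mul])
end
end

section
/- The full isometry group of the half-space model is G: assume p ≥ 1 and q ≥ 1, and let φ : ℋ^{p,q} → ℋ^{p,q} be a smooth bijection with smooth inverse such that for every point P ∈ ℋ^{p,q} and every vector (u, v, w) ∈ ℝ^{p−1} × ℝ^q × ℝ, g_{φ(P)}(Dφ_P(u, v, w)) = g_P(u, v, w), where Dφ_P is the Fréchet derivative of φ at P. Then φ belongs to G: there exist λ > 0, a linear automorphism A of ℝ^{p+q−1} preserving the quadratic form Q_{p−1,q}(x, y) = ‖x‖² − ‖y‖², and (x₀, y₀) ∈ ℝ^{p−1} × ℝ^q,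 such that φ(x, y, z) = (λ(A(x, y) + (x₀, y₀)), λz) for all (x, y, z) ∈ ℋ^{p,q}. -/
/-!
Write `V = ℝ^{p-1} × ℝ^q × ℝ`, let `B` be the flat bilinear form of signature `(p, q)` on `V`,
`e = (0, 0, 1)`, `ζ` the height component of `φ`, and `f = z / ζ`. Being an isometry means that
`φ` is conformal for the flat form: `f² B(DφU, DφW) = B(U, W)`.

* Differentiating this identity and using the symmetry of `D²φ` (the Koszul trick) gives
  `f B(D²φ(U, W), DφZ) = df(Z) b(U, W) - df(U) b(W, Z) - df(W) b(U, Z)`, where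
  `b(U, W) = B(DφU, DφW)` (`koszul`).
* Choose `Z` with `DφZ = e`. Then `dζ = b(·, Z)` and `D²ζ = B(D²φ(·,·), DφZ)`, so comparing with
  the second derivative of `f ζ = z` leaves `ζ D²f = -df(Z) b`. Thus `D²f` is pointwise a multiple
  of `B`; as `D³f` is symmetric and `dim V ≥ 2`, the multiple is a constant `μ`, and `f` is a
  quadratic polynomial `μ/2 B(P, P) + ℓ(P) + c` (`quadratic_of_hessian`).
* `f > 0` on the half-space, and `B` takes both signs there because `q ≥ 1`; hence `μ = 0` and
  `ℓ` vanishes on horizontal vectors (`positivity_forces`). Now `μ = 0` gives `df(Z) = 0`, while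
  the first derivative of `f ζ = z` along `Z` gives `f = z(Z)`; so `z(Z) ≠ 0` and `ℓ = 0`.
* Hence `f` is constant, the Koszul formula gives `D²φ = 0`, and `φ` is affine with height
  component `λ z`. The shape of the linear part follows from nondegeneracy of `B`
  (`affine_shape`).
-/

open scoped RealInnerProductSpace

noncomputable section

/-- The half-space metric `g` at a point `P` (with vertical coordinate `P.2`),
evaluated on a tangent vector `V = ((u, v), w)`. -/
def halfSpaceMetric {p q : ℕ} (P V : (E (p - 1) × E q) × ℝ) : ℝ :=
  (‖V.1.1‖ ^ 2 - ‖V.1.2‖ ^ 2 + V.2 ^ 2) / P.2 ^ 2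

open Set

/-! ### The flat bilinear form -/

/-- The ambient vector space of the half-space. -/
abbrev HV (m q : ℕ) : Type := (E m × E q) × ℝ

/-- The open upper half-space. -/
abbrev HH (m q : ℕ) : Set (HV m q) := {P | 0 < P.2}

/-- The flat symmetric bilinear form of signature `(m + 1, q)`. -/
def flatB (m q : ℕ) : HV m q →L[ℝ] HV m q →L[ℝ] ℝ :=
  (innerSL ℝ).bilinearComp
      ((ContinuousLinearMap.fst ℝ (E m) (E q)).comp (ContinuousLinearMap.fst ℝ _ ℝ))
      ((ContinuousLinearMap.fst ℝ (E m) (E q)).comp (ContinuousLinearMap.fst ℝ _ ℝ))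
    - (innerSL ℝ).bilinearComp
      ((ContinuousLinearMap.snd ℝ (E m) (E q)).comp (ContinuousLinearMap.fst ℝ _ ℝ))
      ((ContinuousLinearMap.snd ℝ (E m) (E q)).comp (ContinuousLinearMap.fst ℝ _ ℝ))
    + (innerSL ℝ).bilinearComp
      (ContinuousLinearMap.snd ℝ (E m × E q) ℝ) (ContinuousLinearMap.snd ℝ (E m × E q) ℝ)

/-- The vertical unit vector. -/
def vert (m q : ℕ) : HV m q := (0, 1)

section

variable {m q : ℕ}

lemma flatB_apply (U W : HV m q) :
    flatB m q U W = ⟪U.1.1, W.1.1⟫ - ⟪U.1.2, W.1.2⟫ + U.2 * W.2 := by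
  simp [flatB, mul_comm]

lemma flatB_comm (U W : HV m q) : flatB m q U W = flatB m q W U := by
  simp only [flatB_apply, real_inner_comm, mul_comm]

lemma flatB_self (U : HV m q) : flatB m q U U = ‖U.1.1‖ ^ 2 - ‖U.1.2‖ ^ 2 + U.2 ^ 2 := by
  simp only [flatB_apply, real_inner_self_eq_norm_sq, sq U.2]

lemma flatB_vert (U : HV m q) : flatB m q U (vert m q) = U.2 := by
  simp [flatB_apply, vert]

lemma flatB_nondeg {U : HV m q} (h : ∀ W, flatB m q U W = 0) : U = 0 := by
  have h1 := h ((U.1.1, -U.1.2), U.2)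
  simp only [flatB_apply, inner_neg_right, real_inner_self_eq_norm_sq] at h1
  have a := sq_nonneg ‖U.1.1‖
  have b := sq_nonneg ‖U.1.2‖
  have c := mul_self_nonneg U.2
  have a0 : ‖U.1.1‖ ^ 2 = 0 := by linarith
  have b0 : ‖U.1.2‖ ^ 2 = 0 := by linarith
  have c0 : U.2 * U.2 = 0 := by linarith
  ext1
  · ext1
    · simpa using a0
    · simpa using b0
  · simpa using c0

/-! ### Calculus on the half-space -/

lemma isOpen_HH : IsOpen (HH m q) := isOpen_lt continuous_const continuous_snd

lemma convex_HH : Convex ℝ (HH m q) :=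
  convex_halfSpace_gt (f := fun P : HV m q => P.2) ⟨fun _ _ => rfl, fun _ _ => rfl⟩ 0

lemma const_of_deriv_zero {F : Type*} [NormedAddCommGroup F] [NormedSpace ℝ F]
    {g : HV m q → F} (h : ∀ P ∈ HH m q, HasFDerivAt g (0 : HV m q →L[ℝ] F) P) :
    ∃ c, ∀ P ∈ HH m q, g P = c := by
  refine ⟨g (vert m q), fun P hP => ?_⟩
  have hv : vert m q ∈ HH m q := by simp [vert]
  exact isOpen_HH.is_const_of_fderiv_eq_zero convex_HH.isPreconnected
    (fun x hx => (h x hx).differentiableAt.differentiableWithinAt)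
    (fun x hx => (h x hx).fderiv) hP hv

lemma hasFDerivAt_of_smooth {F : Type*} [NormedAddCommGroup F] [NormedSpace ℝ F]
    {g : HV m q → F} (hg : ContDiffOn ℝ (⊤ : ℕ∞) g (HH m q)) {P : HV m q} (hP : P ∈ HH m q) :
    HasFDerivAt g (fderiv ℝ g P) P :=
  ((hg.differentiableOn (by simp)).differentiableAt (isOpen_HH.mem_nhds hP)).hasFDerivAt

lemma smooth_fderiv {F : Type*} [NormedAddCommGroup F] [NormedSpace ℝ F]
    {g : HV m q → F} (hg : ContDiffOn ℝ (⊤ : ℕ∞) g (HH m q)) :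
    ContDiffOn ℝ (⊤ : ℕ∞) (fderiv ℝ g) (HH m q) :=
  hg.fderiv_of_isOpen isOpen_HH (by simp)

lemma fderiv2_symm {F : Type*} [NormedAddCommGroup F] [NormedSpace ℝ F]
    {g : HV m q → F} (hg : ContDiffOn ℝ (⊤ : ℕ∞) g (HH m q)) {P : HV m q} (hP : P ∈ HH m q)
    (U W : HV m q) : fderiv ℝ (fderiv ℝ g) P U W = fderiv ℝ (fderiv ℝ g) P W U :=
  second_derivative_symmetric_of_eventually
    (Filter.eventually_of_mem (isOpen_HH.mem_nhds hP) fun _ hy => hasFDerivAt_of_smooth hg hy)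
    (hasFDerivAt_of_smooth (smooth_fderiv hg) hP) U W

/-- Derivatives of functions agreeing on the half-space agree there. -/
lemma deriv_unique {F : Type*} [NormedAddCommGroup F] [NormedSpace ℝ F]
    {g h : HV m q → F} {g' h' : HV m q →L[ℝ] F} {P : HV m q} (hP : P ∈ HH m q)
    (hg : HasFDerivAt g g' P) (hh : HasFDerivAt h h' P) (heq : ∀ y ∈ HH m q, g y = h y) :
    g' = h' :=
  hg.unique (hh.congr_of_eventuallyEq (Filter.eventually_of_mem (isOpen_HH.mem_nhds hP) heq))

/-! ### Functions with Hessian proportional to the flat form -/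

/-- A function whose Hessian is pointwise proportional to `B` is a quadratic polynomial. The
symmetry of the third derivative forces the factor to be constant: vertical and horizontal
directions are compared through `B(e, e) = 1` and a unit vector of `ℝ^q`. -/
lemma quadratic_of_hessian (hq : 1 ≤ q) {f : HV m q → ℝ}
    (hf : ContDiffOn ℝ (⊤ : ℕ∞) f (HH m q))
    (hess : ∀ P ∈ HH m q, ∃ k : ℝ, ∀ U W,
      fderiv ℝ (fderiv ℝ f) P U W = k * flatB m q U W) :
    ∃ (μ : ℝ) (l : HV m q →L[ℝ] ℝ) (c : ℝ), ∀ P ∈ HH m q,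
      f P = μ / 2 * flatB m q P P + l P + c ∧
      (∀ W, fderiv ℝ f P W = μ * flatB m q P W + l W) ∧
      ∀ U W, fderiv ℝ (fderiv ℝ f) P U W = μ * flatB m q U W := by
  set e := vert m q with he
  have hee : flatB m q e e = 1 := by rw [flatB_vert]; rfl
  have hf1 := smooth_fderiv hf
  have hf2 := smooth_fderiv hf1
  set κ : HV m q → ℝ := fun P => fderiv ℝ (fderiv ℝ f) P e e with hκ
  have hessκ : ∀ P ∈ HH m q, ∀ U W,
      fderiv ℝ (fderiv ℝ f) P U W = κ P * flatB m q U W := by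
    intro P hP U W
    obtain ⟨k, hk⟩ := hess P hP
    have : κ P = k := by simp only [hκ, hk, hee, mul_one]
    rw [this, hk]
  have hd : ∀ P ∈ HH m q, ∀ U W : HV m q,
      HasFDerivAt (fun y => fderiv ℝ (fderiv ℝ f) y U W)
        (((fderiv ℝ (fderiv ℝ (fderiv ℝ f)) P).flip U).flip W) P := by
    intro P hP U W
    have h := hasFDerivAt_of_smooth hf2 hP
    have h1 := (h.clm_apply (hasFDerivAt_const U P)).clm_apply (hasFDerivAt_const W P)
    refine h1.congr_fderiv (ContinuousLinearMap.ext fun Z => ?_)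
    simp
  obtain ⟨μ, hμ⟩ : ∃ μ, ∀ P ∈ HH m q, κ P = μ := by
    apply const_of_deriv_zero
    intro P hP
    have h1 := hd P hP e e
    set κ' := ((fderiv ℝ (fderiv ℝ (fderiv ℝ f)) P).flip e).flip e with hκ'
    have h3 : ∀ Z U W, fderiv ℝ (fderiv ℝ (fderiv ℝ f)) P Z U W = κ' Z * flatB m q U W := by
      intro Z U W
      have := deriv_unique hP (hd P hP U W) (h1.mul_const (flatB m q U W))
        (fun y hy => hessκ y hy U W)
      have := congrArg (fun L : HV m q →L[ℝ] ℝ => L Z) this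
      simpa [mul_comm] using this
    have hs : ∀ Z U W, κ' Z * flatB m q U W = κ' U * flatB m q Z W := by
      intro Z U W
      rw [← h3, ← h3, fderiv2_symm hf1 hP]
    have hz : κ' = 0 := by
      let y : HV m q := ((0, EuclideanSpace.single ⟨0, hq⟩ 1), 0)
      have hyy : flatB m q y y = -1 := by simp [flatB_self, y]
      have hey : flatB m q e y = 0 := by rw [flatB_comm, flatB_vert]
      have h0 : κ' e = 0 := by
        have := hs e y y
        rw [hyy, hey] at this
        linarith
      refine ContinuousLinearMap.ext fun Z => ?_
      have := hs Z e e
      rw [hee, h0] at this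
      simpa using this
    rw [← hz]
    exact h1
  obtain ⟨l, hl⟩ : ∃ l, ∀ P ∈ HH m q, fderiv ℝ f P - μ • flatB m q P = l := by
    apply const_of_deriv_zero
    intro P hP
    have h := (hasFDerivAt_of_smooth hf1 hP).sub ((flatB m q).hasFDerivAt.const_smul μ (x := P))
    refine h.congr_fderiv (ContinuousLinearMap.ext fun U => ContinuousLinearMap.ext fun W => ?_)
    simp [hessκ P hP, hμ P hP]
  have hdf : ∀ P ∈ HH m q, ∀ W, fderiv ℝ f P W = μ * flatB m q P W + l W := by
    intro P hP W
    rw [← hl P hP]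
    simp
  obtain ⟨c, hc⟩ : ∃ c, ∀ P ∈ HH m q, f P - (μ / 2 * flatB m q P P + l P) = c := by
    apply const_of_deriv_zero
    intro P hP
    have hB : HasFDerivAt (fun y => flatB m q y y) _ P :=
      (flatB m q).hasFDerivAt.clm_apply (hasFDerivAt_id P)
    have h := (hasFDerivAt_of_smooth hf hP).sub ((hB.const_mul (μ / 2)).add l.hasFDerivAt)
    refine h.congr_fderiv (ContinuousLinearMap.ext fun W => ?_)
    have := flatB_comm P W
    simp [hdf P hP, this]
    ring
  refine ⟨μ, l, c, fun P hP => ⟨?_, hdf P hP, fun U W => ?_⟩⟩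
  · linarith [hc P hP]
  · rw [hessκ P hP, hμ P hP]

lemma nonneg_of_quadratic {a b c : ℝ} (h : ∀ t : ℝ, 0 < t → 0 < a * t ^ 2 + b * t + c) :
    0 ≤ a := by
  by_contra ha
  push Not at ha
  -- `t ≥ 1` is chosen so that `a t = a - (|b| + |c|)`
  set t := 1 + (|b| + |c|) / (-a) with ht
  have h0 : 0 ≤ (|b| + |c|) / (-a) := by have := neg_pos.2 ha; positivity
  have hat : a * t = a - (|b| + |c|) := by rw [ht]; field_simp [ha.ne]; ring
  have h1 := h t (by linarith)
  have : a * t ^ 2 + b * t + c = (a - (|b| + |c|)) * t + b * t + c := by rw [← hat]; ring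
  have hb := le_abs_self b
  have hc := le_abs_self c
  have := abs_nonneg c
  nlinarith [mul_nonneg (abs_nonneg c) h0, mul_nonneg (sub_nonneg.2 hb) h0]

lemma zero_of_affine_pos {b c : ℝ} (h : ∀ t : ℝ, 0 < b * t + c) : b = 0 := by
  by_contra hb
  have := h (-(c / b))
  field_simp at this
  simp at this

/-- A quadratic polynomial with leading part a multiple of `B` that is positive on the half-space
is an affine function of the height: vertical lines bound the factor from below and a negative
direction of `B` bounds it from above. -/
lemma positivity_forces (hq : 1 ≤ q) {μ c : ℝ} {l : HV m q →L[ℝ] ℝ}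
    (h : ∀ P ∈ HH m q, 0 < μ / 2 * flatB m q P P + l P + c) :
    μ = 0 ∧ ∀ U, l U = U.2 * l (vert m q) := by
  have hμ0 : 0 ≤ μ / 2 := by
    refine nonneg_of_quadratic (b := l (vert m q)) (c := c) fun t ht => ?_
    have := h (t • vert m q) (by simpa [vert] using ht)
    have h2 : flatB m q (vert m q) (vert m q) = 1 := by rw [flatB_vert]; rfl
    simp only [map_smul, _root_.smul_apply, smul_eq_mul, h2] at this
    linarith
  have hμ1 : 0 ≤ -(μ / 2) := by
    let y : HV m q := ((0, EuclideanSpace.single ⟨0, hq⟩ 1), 0)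
    refine nonneg_of_quadratic (b := l y) (c := μ / 2 + l (vert m q) + c) fun t ht => ?_
    have := h (vert m q + t • y) (by simp [vert, y])
    have h2 : flatB m q (vert m q + t • y) (vert m q + t • y) = 1 - t ^ 2 := by
      simp [flatB_self, vert, y, norm_smul]
      ring
    rw [h2] at this
    simp only [map_add, map_smul, smul_eq_mul] at this
    linarith
  have hμ : μ = 0 := by linarith
  refine ⟨hμ, fun U => ?_⟩
  have hU : l (U - U.2 • vert m q) = 0 := by
    refine zero_of_affine_pos (c := l (vert m q) + c) fun t => ?_
    have := h (vert m q + t • (U - U.2 • vert m q)) (by simp [vert])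
    simp only [hμ, map_add, map_smul, smul_eq_mul] at this ⊢
    linarith
  simp only [map_sub, map_smul, smul_eq_mul] at hU
  linarith

/-! ### Conformal maps of the flat form -/

/-- The Koszul-type formula for a conformal map: the derivative of the conformality relation,
cyclically permuted, determines `D²φ`. -/
lemma koszul {φ : HV m q → HV m q} {f : HV m q → ℝ}
    (hφ : ContDiffOn ℝ (⊤ : ℕ∞) φ (HH m q)) (hf : ContDiffOn ℝ (⊤ : ℕ∞) f (HH m q))
    (hf0 : ∀ P ∈ HH m q, 0 < f P)
    (hconf : ∀ P ∈ HH m q, ∀ U W,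
      f P ^ 2 * flatB m q (fderiv ℝ φ P U) (fderiv ℝ φ P W) = flatB m q U W)
    {P : HV m q} (hP : P ∈ HH m q) (U W Z : HV m q) :
    f P * flatB m q (fderiv ℝ (fderiv ℝ φ) P U W) (fderiv ℝ φ P Z) =
      fderiv ℝ f P Z * flatB m q (fderiv ℝ φ P U) (fderiv ℝ φ P W)
      - fderiv ℝ f P U * flatB m q (fderiv ℝ φ P W) (fderiv ℝ φ P Z)
      - fderiv ℝ f P W * flatB m q (fderiv ℝ φ P U) (fderiv ℝ φ P Z) := by
  have hφ1 := smooth_fderiv hφ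
  have hfP := hf0 P hP
  have key : ∀ U W Z : HV m q,
      f P * (flatB m q (fderiv ℝ (fderiv ℝ φ) P Z U) (fderiv ℝ φ P W)
        + flatB m q (fderiv ℝ (fderiv ℝ φ) P Z W) (fderiv ℝ φ P U))
      = -2 * fderiv ℝ f P Z * flatB m q (fderiv ℝ φ P U) (fderiv ℝ φ P W) := by
    intro U W Z
    have hD : ∀ U, HasFDerivAt (fun y => fderiv ℝ φ y U) _ P := fun U =>
      (hasFDerivAt_of_smooth hφ1 hP).clm_apply (hasFDerivAt_const U P)
    have hfd := hasFDerivAt_of_smooth hf hP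
    have hBU := (flatB m q).hasFDerivAt.comp P (hD U)
    have h1 := (hfd.mul hfd).mul (hBU.clm_apply (hD W))
    have h2 := deriv_unique hP h1 (hasFDerivAt_const (flatB m q U W) P)
      (fun y hy => by simpa [sq] using hconf y hy U W)
    have h3 := congrArg (fun L : HV m q →L[ℝ] ℝ => L Z) h2
    simp at h3
    rw [flatB_comm (fderiv ℝ (fderiv ℝ φ) P Z W)]
    apply mul_left_cancel₀ hfP.ne'
    linarith
  have k1 := key W Z U
  have k2 := key U Z W
  have k3 := key U W Z
  rw [fderiv2_symm hφ hP W U] at k2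
  rw [fderiv2_symm hφ hP Z U, fderiv2_symm hφ hP Z W] at k3
  linarith

/-- An affine conformal map with constant factor and height component `lam * z` lies in
`G`. -/
lemma affine_shape {φ : HV m q → HV m q} {lam : ℝ} (hlam : 0 < lam)
    {L : HV m q →L[ℝ] HV m q} {c : HV m q} (hL : ∀ P ∈ HH m q, φ P = L P + c)
    (hsurj : Function.Surjective L)
    (hB : ∀ U W, flatB m q (L U) (L W) = lam ^ 2 * flatB m q U W)
    (hz : ∀ P ∈ HH m q, (φ P).2 = lam * P.2) :
    ∃ A : (E m × E q) ≃ₗ[ℝ] (E m × E q),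
      (∀ v, ‖(A v).1‖ ^ 2 - ‖(A v).2‖ ^ 2 = ‖v.1‖ ^ 2 - ‖v.2‖ ^ 2) ∧
    ∃ d : E m × E q, ∀ P ∈ HH m q, φ P = (lam • (A P.1 + d), lam * P.2) := by
  have hv : vert m q ∈ HH m q := by simp [vert]
  have hL2' : ∀ P ∈ HH m q, (L P).2 + c.2 = lam * P.2 := by
    intro P hP
    rw [← hz P hP, hL P hP]; rfl
  have hc2 : c.2 = 0 := by
    have h1 := hL2' _ hv
    have h2 := hL2' ((2 : ℝ) • vert m q) (by simp [vert])
    simp only [map_smul, Prod.smul_snd, smul_eq_mul] at h2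
    linarith
  have hL2 : ∀ U : HV m q, (L U).2 = lam * U.2 := by
    intro U
    have h1 := hL2' _ hv
    have h2 := hL2' (U + (1 - U.2) • vert m q) (by simp [vert])
    simp only [map_add, map_smul, Prod.smul_snd, Prod.snd_add, smul_eq_mul] at h2
    rw [hc2] at h1 h2
    have h3 : (L (vert m q)).2 = lam := by simpa [vert] using h1
    have h4 : (vert m q).2 = 1 := rfl
    rw [h3, h4] at h2
    linarith
  have hLe : L (vert m q) = lam • vert m q := by
    refine sub_eq_zero.1 (flatB_nondeg fun Y => ?_)
    obtain ⟨W, rfl⟩ := hsurj Y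
    have h1 : flatB m q (vert m q) (L W) = lam * W.2 := by rw [flatB_comm, flatB_vert, hL2]
    have h2 : flatB m q (vert m q) W = W.2 := by rw [flatB_comm, flatB_vert]
    simp only [map_sub, map_smul, _root_.sub_apply, _root_.smul_apply,
      hB, h1, h2, smul_eq_mul]
    ring
  let A₀ : (E m × E q) →ₗ[ℝ] (E m × E q) :=
    lam⁻¹ • (LinearMap.fst ℝ _ ℝ ∘ₗ (L : HV m q →ₗ[ℝ] HV m q) ∘ₗ LinearMap.inl ℝ _ ℝ)
  have hA₀ : ∀ v, A₀ v = lam⁻¹ • (L (v, 0)).1 := fun v => rfl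
  have hLA : ∀ v, L (v, 0) = (lam • A₀ v, 0) := by
    intro v
    ext1
    · simp [hA₀, smul_smul, hlam.ne']
    · simp [hL2]
  have hinj : Function.Injective A₀ := by
    rw [injective_iff_map_eq_zero]
    intro v hv0
    have hLv : L (v, 0) = 0 := by rw [hLA, hv0]; simp
    have : ((v, 0) : HV m q) = 0 := flatB_nondeg fun W => by
      have := hB (v, 0) W
      rw [hLv] at this
      simpa [hlam.ne'] using this
    exact congrArg Prod.fst this
  refine ⟨LinearEquiv.ofInjectiveEndo A₀ hinj, fun v => ?_, lam⁻¹ • c.1, fun P hP => ?_⟩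
  · have h := hB (v, 0) (v, 0)
    rw [hLA, flatB_self, flatB_self] at h
    simp only [Prod.smul_fst, Prod.smul_snd, norm_smul, mul_pow, Real.norm_eq_abs, sq_abs] at h
    have h0 : lam ^ 2 ≠ 0 := by positivity
    apply mul_left_cancel₀ h0
    simp only [LinearEquiv.coe_ofInjectiveEndo]
    linarith
  · ext1
    · have hdec : P = (P.1, 0) + P.2 • vert m q := by
        ext1 <;> simp [vert]
      have : L P = (lam • A₀ P.1, lam * P.2) := by
        conv_lhs => rw [hdec, map_add, map_smul, hLe, hLA]
        ext1 <;> simp [vert, mul_comm]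
      rw [hL P hP, this]
      simp [smul_smul, hlam.ne']
    · exact hz P hP

/-- A smooth isometric self-map of the half-space lies in `G`; surjectivity of `Dφ` comes from the
nondegeneracy of `B`. -/
theorem isometry_mem_G (hq : 1 ≤ q) {φ : HV m q → HV m q}
    (hφs : ContDiffOn ℝ (⊤ : ℕ∞) φ (HH m q)) (hmaps : Set.MapsTo φ (HH m q) (HH m q))
    (hiso : ∀ P ∈ HH m q, ∀ V : HV m q,
      flatB m q (fderiv ℝ φ P V) (fderiv ℝ φ P V) / (φ P).2 ^ 2 = flatB m q V V / P.2 ^ 2) :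
    ∃ lam : ℝ, 0 < lam ∧
    ∃ A : (E m × E q) ≃ₗ[ℝ] (E m × E q),
      (∀ v, ‖(A v).1‖ ^ 2 - ‖(A v).2‖ ^ 2 = ‖v.1‖ ^ 2 - ‖v.2‖ ^ 2) ∧
    ∃ d : E m × E q, ∀ P ∈ HH m q, φ P = (lam • (A P.1 + d), lam * P.2) := by
  have hv : vert m q ∈ HH m q := by simp [vert]
  have hζ0 : ∀ P ∈ HH m q, 0 < (φ P).2 := fun P hP => hmaps hP
  have hφ1 := smooth_fderiv hφs
  set f : HV m q → ℝ := fun P => P.2 / (φ P).2 with hf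
  have hf0 : ∀ P ∈ HH m q, 0 < f P := fun P hP => div_pos hP (hζ0 P hP)
  have hfζ : ∀ P ∈ HH m q, f P * (φ P).2 = P.2 := fun P hP =>
    div_mul_cancel₀ _ (hζ0 P hP).ne'
  have hfs : ContDiffOn ℝ (⊤ : ℕ∞) f (HH m q) :=
    contDiff_snd.contDiffOn.div (contDiff_snd.comp_contDiffOn hφs) fun P hP => (hζ0 P hP).ne'
  have hf1 := smooth_fderiv hfs
  have hdiag : ∀ P ∈ HH m q, ∀ V,
      f P ^ 2 * flatB m q (fderiv ℝ φ P V) (fderiv ℝ φ P V) = flatB m q V V := by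
    intro P hP V
    have h := hiso P hP V
    have h1 := hζ0 P hP
    have h2 : (0 : ℝ) < P.2 := hP
    simp only [hf]
    field_simp at h ⊢
    linarith
  have hconf : ∀ P ∈ HH m q, ∀ U W,
      f P ^ 2 * flatB m q (fderiv ℝ φ P U) (fderiv ℝ φ P W) = flatB m q U W := by
    -- polarization
    intro P hP U W
    have h := hdiag P hP (U + W)
    have hU := hdiag P hP U
    have hW := hdiag P hP W
    simp only [map_add, _root_.add_apply] at h
    rw [flatB_comm W U, flatB_comm (fderiv ℝ φ P W) (fderiv ℝ φ P U)] at h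
    linarith
  have hsurj : ∀ P ∈ HH m q, Function.Surjective (fderiv ℝ φ P) := by
    intro P hP Y
    have hinj : Function.Injective (fderiv ℝ φ P : HV m q →ₗ[ℝ] HV m q) := by
      rw [injective_iff_map_eq_zero]
      intro U hU
      refine flatB_nondeg fun W => ?_
      have hU' : fderiv ℝ φ P U = 0 := hU
      rw [← hconf P hP U W, hU']
      simp
    exact LinearMap.surjective_of_injective hinj Y
  -- first and second derivatives of `f * ζ = z`
  have hζd : ∀ P ∈ HH m q, HasFDerivAt (fun y => (φ y).2)
      ((ContinuousLinearMap.snd ℝ (E m × E q) ℝ).comp (fderiv ℝ φ P)) P := fun P hP =>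
    (ContinuousLinearMap.snd ℝ (E m × E q) ℝ).hasFDerivAt.comp P (hasFDerivAt_of_smooth hφs hP)
  have first : ∀ P ∈ HH m q, ∀ W,
      f P * (fderiv ℝ φ P W).2 + (φ P).2 * fderiv ℝ f P W = W.2 := by
    intro P hP W
    have h := deriv_unique hP ((hasFDerivAt_of_smooth hfs hP).mul (hζd P hP))
      (ContinuousLinearMap.snd ℝ (E m × E q) ℝ).hasFDerivAt hfζ
    simpa using congrArg (fun L : HV m q →L[ℝ] ℝ => L W) h
  have second : ∀ P ∈ HH m q, ∀ U W,
      f P * (fderiv ℝ (fderiv ℝ φ) P U W).2 + fderiv ℝ f P U * (fderiv ℝ φ P W).2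
      + fderiv ℝ f P W * (fderiv ℝ φ P U).2 + (φ P).2 * fderiv ℝ (fderiv ℝ f) P U W = 0 := by
    intro P hP U W
    have hDφ := (hasFDerivAt_of_smooth hφ1 hP).clm_apply (hasFDerivAt_const W P)
    have hDζ := (ContinuousLinearMap.snd ℝ (E m × E q) ℝ).hasFDerivAt.comp P hDφ
    have hDf := (hasFDerivAt_of_smooth hf1 hP).clm_apply (hasFDerivAt_const W P)
    have h := deriv_unique hP
      (((hasFDerivAt_of_smooth hfs hP).mul hDζ).add ((hζd P hP).mul hDf))
      (hasFDerivAt_const W.2 P) (fun y hy => first y hy W)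
    have h' := congrArg (fun L : HV m q →L[ℝ] ℝ => L U) h
    simp at h'
    linarith
  -- `ζ D²f = -df(Z) b` whenever `DφZ = e`
  have hessZ : ∀ P ∈ HH m q, ∀ Z, fderiv ℝ φ P Z = vert m q → ∀ U W,
      (φ P).2 * fderiv ℝ (fderiv ℝ f) P U W
        = -(fderiv ℝ f P Z * flatB m q (fderiv ℝ φ P U) (fderiv ℝ φ P W)) := by
    intro P hP Z hZ U W
    have h1 := koszul hφs hfs hf0 hconf hP U W Z
    rw [hZ, flatB_vert, flatB_vert, flatB_vert] at h1
    linarith [second P hP U W]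
  obtain ⟨μ, l, c, hquad⟩ := quadratic_of_hessian hq hfs (by
    intro P hP
    obtain ⟨Z, hZ⟩ := hsurj P hP (vert m q)
    have a := (hf0 P hP).ne'
    have b := (hζ0 P hP).ne'
    refine ⟨-(fderiv ℝ f P Z) / ((φ P).2 * f P ^ 2), fun U W => ?_⟩
    have h := hessZ P hP Z hZ U W
    rw [← hconf P hP U W]
    field_simp
    linarith)
  obtain ⟨hμ, hl⟩ := positivity_forces hq (μ := μ) (c := c) (l := l)
    fun P hP => (hquad P hP).1 ▸ hf0 P hP
  subst hμ
  have hl0 : l = 0 := by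
    obtain ⟨Z, hZ⟩ := hsurj _ hv (vert m q)
    have h1 := hessZ _ hv Z hZ Z Z
    have hZ1 : flatB m q (fderiv ℝ φ (vert m q) Z) (fderiv ℝ φ (vert m q) Z) = 1 := by
      rw [hZ, flatB_vert]; rfl
    rw [hZ1, (hquad _ hv).2.2] at h1
    have hdf : fderiv ℝ f (vert m q) Z = 0 := by linarith
    have h2 := first _ hv Z
    have hZ2 : (fderiv ℝ φ (vert m q) Z).2 = 1 := by rw [hZ]; rfl
    rw [hdf, hZ2] at h2
    have hpos : 0 < Z.2 := by linarith [hf0 _ hv]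
    rw [(hquad _ hv).2.1, hl Z] at hdf
    have : l (vert m q) = 0 := by simpa [hpos.ne'] using hdf
    refine ContinuousLinearMap.ext fun U => ?_
    rw [hl U, this]
    simp
  have hfc : ∀ P ∈ HH m q, f P = c := fun P hP => by simpa [hl0] using (hquad P hP).1
  have hdf0 : ∀ P ∈ HH m q, ∀ W, fderiv ℝ f P W = 0 := fun P hP W => by
    simpa [hl0] using (hquad P hP).2.1 W
  have hc : 0 < c := hfc _ hv ▸ hf0 _ hv
  obtain ⟨L, hL⟩ : ∃ L, ∀ P ∈ HH m q, fderiv ℝ φ P = L := by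
    apply const_of_deriv_zero
    intro P hP
    refine (hasFDerivAt_of_smooth hφ1 hP).congr_fderiv
      (ContinuousLinearMap.ext fun U => ContinuousLinearMap.ext fun W => ?_)
    refine flatB_nondeg fun Y => ?_
    obtain ⟨Z, rfl⟩ := hsurj P hP Y
    have h := koszul hφs hfs hf0 hconf hP U W Z
    simp only [hdf0 P hP, zero_mul, sub_zero] at h
    exact (mul_eq_zero.1 h).resolve_left (hf0 P hP).ne'
  obtain ⟨d, hd⟩ : ∃ d, ∀ P ∈ HH m q, φ P - L P = d := by
    apply const_of_deriv_zero
    intro P hP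
    have h := (hasFDerivAt_of_smooth hφs hP).sub (L.hasFDerivAt (x := P))
    rwa [hL P hP, sub_self] at h
  refine ⟨c⁻¹, inv_pos.2 hc, affine_shape (inv_pos.2 hc) (L := L) (c := d) ?_ ?_ ?_ ?_⟩
  · intro P hP
    rw [← hd P hP]; abel
  · rw [← hL _ hv]; exact hsurj _ hv
  · intro U W
    have h := hconf _ hv U W
    rw [hL _ hv, hfc _ hv] at h
    rw [← h]
    field_simp
  · intro P hP
    have h := hfζ P hP
    rw [hfc P hP] at h
    rw [← h]
    field_simp

end

/-- The full isometry group of the half-space model is `G` (for `q ≥ 1`): any smooth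
bijection of the half-space onto itself, with smooth inverse, whose Fréchet derivative
preserves the half-space metric, is of the form
`(x, y, z) ↦ (λ(A(x, y) + (x₀, y₀)), λz)` with `λ > 0`, `A` a linear automorphism of
`ℝ^{p+q-1}` preserving the quadratic form `Q_{p-1,q}`, and `(x₀, y₀) ∈ ℝ^{p-1} × ℝ^q`. -/
theorem stmt19 (p q : ℕ) (hp : 1 ≤ p) (hq : 1 ≤ q)
    (φ ψ : (E (p - 1) × E q) × ℝ → (E (p - 1) × E q) × ℝ)
    (hφs : ContDiffOn ℝ (⊤ : ℕ∞) φ {P : (E (p - 1) × E q) × ℝ | 0 < P.2})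
    (hψs : ContDiffOn ℝ (⊤ : ℕ∞) ψ {P : (E (p - 1) × E q) × ℝ | 0 < P.2})
    (hbij : Set.BijOn φ {P : (E (p - 1) × E q) × ℝ | 0 < P.2}
      {P : (E (p - 1) × E q) × ℝ | 0 < P.2})
    (hinv : ∀ P ∈ {P : (E (p - 1) × E q) × ℝ | 0 < P.2}, ψ (φ P) = P ∧ φ (ψ P) = P)
    (hiso : ∀ P ∈ {P : (E (p - 1) × E q) × ℝ | 0 < P.2},
      ∀ V : (E (p - 1) × E q) × ℝ,
        halfSpaceMetric (φ P) (fderiv ℝ φ P V) = halfSpaceMetric P V) :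
    ∃ lam : ℝ, 0 < lam ∧
    ∃ A : (E (p - 1) × E q) ≃ₗ[ℝ] (E (p - 1) × E q),
      (∀ v : E (p - 1) × E q, ‖(A v).1‖ ^ 2 - ‖(A v).2‖ ^ 2 = ‖v.1‖ ^ 2 - ‖v.2‖ ^ 2) ∧
    ∃ c : E (p - 1) × E q,
      ∀ P ∈ {P : (E (p - 1) × E q) × ℝ | 0 < P.2},
        φ P = (lam • (A P.1 + c), lam * P.2) := by
  exact isometry_mem_G hq hφs hbij.mapsTo fun P hP V => by
    simpa only [halfSpaceMetric, flatB_self] using hiso P hP V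
end
end
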